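/- arXiv:1712.02454 — 6 statements merged into one kernel-verified Lean document; each statement's English description precedes it below -/
import Mathlib

section
/- The monoid H(2) of hives for GL(2) is freely generated as a commutative monoid by the five hives (written as tuples (h_{11}, h_{21}, h_{22}, h_{31}, h_{32}, h_{33})): h_1 = (0,0,1,0,1,2), h_2 = (0,1,1,1,2,2), h_3 = (0,1,1,1,1,1), h_4 = (0,1,1,2,2,2), h_5 = (0,0,1,0,1,1). That is, the monoid homomorphism N^5 → H(2) sending (m_1,...,m_5) to m_1 h_1 + ... + m_5 h_5 is a bijection. -/
/-- A hive for `GL(2)`, written as a tuple `(h₁₁, h₂₁, h₂₂, h₃₁, h₃₂, h₃₃)`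
(indices `0,...,5`): `h₁₁ = 0`, the rhombus conditions hold, and the three
boundary sequences are non-negative dominant. -/
def IsHive2 (h : Fin 6 → ℤ) : Prop :=
  h 0 = 0 ∧
  -- rhombus conditions
  h 3 + h 2 ≤ h 1 + h 4 ∧
  h 4 + h 0 ≤ h 1 + h 2 ∧
  h 5 + h 1 ≤ h 4 + h 2 ∧
  -- boundary sequence a: (h₂₂ - h₁₁, h₃₃ - h₂₂)
  h 5 - h 2 ≤ h 2 - h 0 ∧ 0 ≤ h 5 - h 2 ∧
  -- boundary sequence b: (h₂₁ - h₁₁, h₃₁ - h₂₁)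
  h 3 - h 1 ≤ h 1 - h 0 ∧ 0 ≤ h 3 - h 1 ∧
  -- boundary sequence c: (h₃₂ - h₃₁, h₃₃ - h₃₂)
  h 5 - h 4 ≤ h 4 - h 3 ∧ 0 ≤ h 5 - h 4

/-- The five generating hives of the hive monoid `H(2)`. -/
def hive2Gens : Fin 5 → Fin 6 → ℤ :=
  ![![0,0,1,0,1,2], ![0,1,1,1,2,2], ![0,1,1,1,1,1], ![0,1,1,2,2,2], ![0,0,1,0,1,1]]

/-!
The integer triangular arrays with `h₁₁ = 0` form a lattice of rank five. Of the nine hive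
inequalities, the three rhombus conditions and the non-negativity of the last terms of `b` and `c`
imply the other four, and the generators form the lattice basis dual to these five facets. So the
coefficients of an array in the generators are its slacks, and it is a hive exactly when they are
all non-negative.
-/

/-- The slacks of the five facet inequalities of the cone of hives: `0 ≤ c₂`, the first and second
rhombus conditions, `0 ≤ b₂`, and the third rhombus condition. They are ordered so that the `k`-th
slack is dual to the generator `hive2Gens k`. -/
def hive2Slack (h : Fin 6 → ℤ) : Fin 5 → ℤ :=
  ![h 5 - h 4, h 1 + h 4 - (h 3 + h 2), h 1 + h 2 - (h 4 + h 0), h 3 - h 1,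
    h 4 + h 2 - (h 5 + h 1)]

/-- The integer combination of the generating hives with coefficients `c`, which are allowed to be
negative so that all arrays with `h₁₁ = 0` are reached. -/
def hive2Comb (c : Fin 5 → ℤ) : Fin 6 → ℤ :=
  fun j => ∑ k : Fin 5, c k * hive2Gens k j

theorem isHive2_iff_hive2Slack_nonneg (h : Fin 6 → ℤ) :
    IsHive2 h ↔ h 0 = 0 ∧ ∀ k, 0 ≤ hive2Slack h k := by
  have slack_nonneg_iff : (∀ k, 0 ≤ hive2Slack h k) ↔
      0 ≤ h 5 - h 4 ∧ 0 ≤ h 1 + h 4 - (h 3 + h 2) ∧ 0 ≤ h 1 + h 2 - (h 4 + h 0) ∧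
        0 ≤ h 3 - h 1 ∧ 0 ≤ h 4 + h 2 - (h 5 + h 1) := by
    simp [hive2Slack, Fin.forall_fin_succ]
  rw [slack_nonneg_iff]
  constructor
  · rintro ⟨corner, rhombus₁, rhombus₂, rhombus₃, -, -, -, b_nonneg, -, c_nonneg⟩
    exact ⟨corner, c_nonneg, by linarith, by linarith, b_nonneg, by linarith⟩
  · rintro ⟨corner, c_nonneg, rhombus₁, rhombus₂, b_nonneg, rhombus₃⟩
    -- With `Rᵢ` the rhombus slacks: `a₁ - a₂ = R₂ + R₃`, `a₂ = c₂ + R₁ + b₂`,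
    -- `b₁ - b₂ = R₁ + R₂` and `c₁ - c₂ = R₁ + R₃`.
    refine ⟨corner, ?_, ?_, ?_, ?_, ?_, ?_, b_nonneg, ?_, c_nonneg⟩ <;> linarith

theorem hive2Comb_eq (c : Fin 5 → ℤ) :
    hive2Comb c =
      ![0, c 1 + c 2 + c 3, c 0 + c 1 + c 2 + c 3 + c 4, c 1 + c 2 + 2 * c 3,
        c 0 + 2 * c 1 + c 2 + 2 * c 3 + c 4, 2 * c 0 + 2 * c 1 + c 2 + 2 * c 3 + c 4] := by
  ext j
  fin_cases j <;> simp [hive2Comb, hive2Gens, Fin.sum_univ_five] <;> ring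

theorem hive2Slack_hive2Comb (c : Fin 5 → ℤ) : hive2Slack (hive2Comb c) = c := by
  ext k
  fin_cases k <;> simp [hive2Slack, hive2Comb_eq] <;> ring

theorem hive2Comb_hive2Slack (h : Fin 6 → ℤ) :
    hive2Comb (hive2Slack h) = fun j => h j - h 0 := by
  ext j
  fin_cases j <;> simp [hive2Slack, hive2Comb_eq] <;> ring

theorem hive2Comb_injective : Function.Injective hive2Comb :=
  Function.LeftInverse.injective hive2Slack_hive2Comb

theorem isHive2_hive2Comb_iff (c : Fin 5 → ℤ) : IsHive2 (hive2Comb c) ↔ ∀ k, 0 ≤ c k := by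
  have corner : hive2Comb c 0 = 0 := by simp [hive2Comb_eq]
  rw [isHive2_iff_hive2Slack_nonneg, hive2Slack_hive2Comb, and_iff_right corner]

theorem IsHive2.exists_eq_hive2Comb {h : Fin 6 → ℤ} (hh : IsHive2 h) :
    ∃ m : Fin 5 → ℕ, h = hive2Comb fun k => (m k : ℤ) := by
  obtain ⟨corner, slack_nonneg⟩ := (isHive2_iff_hive2Slack_nonneg h).1 hh
  obtain ⟨m, slack_eq⟩ : ∃ m : Fin 5 → ℕ, (fun k => (m k : ℤ)) = hive2Slack h :=
    CanLift.prf _ slack_nonneg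
  refine ⟨m, ?_⟩
  simp only [slack_eq, hive2Comb_hive2Slack, corner, sub_zero]

/-- The monoid `H(2)` of hives for `GL(2)` is freely generated as a commutative monoid
by the five hives `h₁, ..., h₅`: every `ℕ`-linear combination of them is a hive, and
every hive is such a combination in a unique way. -/
theorem hive2_free_generation :
    (∀ m : Fin 5 → ℕ, IsHive2 (fun j => ∑ k : Fin 5, (m k : ℤ) * hive2Gens k j)) ∧
    (∀ h : Fin 6 → ℤ, IsHive2 h →
      ∃! m : Fin 5 → ℕ, h = fun j => ∑ k : Fin 5, (m k : ℤ) * hive2Gens k j) := by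
  refine ⟨fun m => (isHive2_hive2Comb_iff _).2 fun k => Int.natCast_nonneg (m k), fun h hh => ?_⟩
  obtain ⟨m, h_eq⟩ := hh.exists_eq_hive2Comb
  refine ⟨m, h_eq, fun m' h_eq' => ?_⟩
  exact Nat.cast_injective.comp_left (hive2Comb_injective (h_eq'.symm.trans h_eq))
end

section
/- For each natural number d, let m_d denote the number of hives h for GL(2) with h_{33} = d. Then the generating function identity (Σ_{d ≥ 0} m_d t^d) · (1−t)^2 (1−t^2)^3 = 1 holds in the ring of formal power series Z[[t]]. In particular m_0 = 1, m_1 = 2, m_2 = 6, m_3 = 10, m_4 = 20, m_5 = 30, m_6 = 50, m_7 = 70, m_8 = 105, m_9 = 140. -/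
/-- `hiveCount2 d` is the number of hives for `GL(2)` with top entry `h₃₃ = d`. -/
noncomputable def hiveCount2 (d : ℕ) : ℕ :=
  Set.ncard {h : Fin 6 → ℤ | IsHive2 h ∧ h 5 = (d : ℤ)}

/-!
The cone of hives for `GL(2)` is simplicial and unimodular: the slacks of the three rhombus
inequalities together with `b₂ ≥ 0` and `c₂ ≥ 0` are free natural-number coordinates, and the other
dominance inequalities follow from these five. In these coordinates `h₃₃` is the linear form with
weights `1, 1, 2, 2, 2`, so the generating function is a product of five geometric series.
Rewriting it as `(1 + t)² / (1 - t²)⁵` separates the even and odd coefficients.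
-/

section WeightedSums

open PowerSeries

theorem X_mul_mk_add_choose {R : Type*} [Semiring R] (m : ℕ) :
    X * mk (fun k => ((m + 1 + k).choose (m + 1) : R)) =
      mk fun k => ((m + k).choose (m + 1) : R) := by
  ext k
  cases k with
  | zero => simp
  | succ k => rw [coeff_succ_X_mul, coeff_mk, coeff_mk, add_right_comm, add_assoc m]

variable {R : Type*} [CommRing R]

theorem expand_mk_one_mul_one_sub_X_pow_eq_one (p : ℕ) (hp : p ≠ 0) :
    expand p hp (mk 1 : R⟦X⟧) * (1 - X ^ p) = 1 := by
  simpa using congrArg (expand p hp) (mk_one_mul_one_sub_eq_one R)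

theorem coeff_expand_mk_one (p : ℕ) (hp : p ≠ 0) (m : ℕ) :
    coeff m (expand p hp (mk 1 : R⟦X⟧)) = if p ∣ m then 1 else 0 := by
  split_ifs with h
  · obtain ⟨k, rfl⟩ := h
    simp [coeff_expand_mul]
  · exact coeff_expand_of_not_dvd p hp _ h

theorem coeff_two_mul_expand_add_X_mul_expand (φ ψ : R⟦X⟧) (k : ℕ) :
    coeff (2 * k) (expand 2 two_ne_zero φ + X * expand 2 two_ne_zero ψ) = coeff k φ := by
  rw [map_add, coeff_expand_mul, add_eq_left]
  cases k with
  | zero => simp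
  | succ k =>
    rw [show 2 * (k + 1) = 2 * k + 1 + 1 by ring, coeff_succ_X_mul]
    exact coeff_expand_of_not_dvd 2 two_ne_zero _ (by omega)

theorem coeff_two_mul_add_one_expand_add_X_mul_expand (φ ψ : R⟦X⟧) (k : ℕ) :
    coeff (2 * k + 1) (expand 2 two_ne_zero φ + X * expand 2 two_ne_zero ψ) = coeff k ψ := by
  rw [map_add, coeff_succ_X_mul, coeff_expand_mul, add_eq_right]
  exact coeff_expand_of_not_dvd 2 two_ne_zero _ (by omega)

section Denumerant

/-- Sylvester's denumerant: the number of solutions `n : σ → ℕ` of `∑ i, w i * n i = d`. As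
`Set.ncard` does, it reads `0` on an infinite solution set, which requires some weight to vanish. -/
noncomputable def denumerant {σ : Type*} [Fintype σ] (w : σ → ℕ) (d : ℕ) : ℕ :=
  {n : σ → ℕ | ∑ i, w i * n i = d}.ncard

variable {σ : Type*} [Fintype σ] {w : σ → ℕ}

theorem denumerant_eq_card_filter_dvd [DecidableEq σ] (hw : ∀ i, w i ≠ 0) (d : ℕ) :
    denumerant w d =
      ((Finset.univ.finsuppAntidiag d).filter fun l : σ →₀ ℕ => ∀ i, w i ∣ l i).card := by
  let scale (n : σ → ℕ) : σ →₀ ℕ := Finsupp.equivFunOnFinite.symm (w * n)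
  have scale_injective : Function.Injective scale :=
    Finsupp.equivFunOnFinite.symm.injective.comp fun m n h =>
      funext fun i => Nat.eq_of_mul_eq_mul_left (Nat.pos_of_ne_zero (hw i)) (congrFun h i)
  rw [denumerant, ← Set.ncard_image_of_injective _ scale_injective, ← Set.ncard_coe_finset]
  congr 1
  ext l
  simp only [Set.mem_image, Set.mem_ofPred_eq, Finset.mem_coe, Finset.mem_filter,
    Finset.mem_finsuppAntidiag, Finset.subset_univ, and_true]
  constructor
  · rintro ⟨n, hn, rfl⟩
    exact ⟨hn, fun i => dvd_mul_right (w i) (n i)⟩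
  · rintro ⟨hl, hdvd⟩
    choose n hn using hdvd
    exact ⟨n, by simpa only [← hn] using hl, Finsupp.ext fun i => (hn i).symm⟩

theorem mk_denumerant_eq_prod_expand (hw : ∀ i, w i ≠ 0) :
    (mk fun d => (denumerant w d : R)) = ∏ i, expand (w i) (hw i) (mk 1) := by
  classical
  ext d
  simp only [coeff_mk, coeff_prod, coeff_expand_mk_one, Finset.prod_boole, Finset.mem_univ,
    forall_const, Finset.sum_boole, denumerant_eq_card_filter_dvd hw]

theorem mk_denumerant_mul_prod_one_sub_X_pow_eq_one (hw : ∀ i, w i ≠ 0) :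
    (mk fun d => (denumerant w d : R)) * ∏ i, (1 - X ^ w i) = 1 := by
  simp only [mk_denumerant_eq_prod_expand hw, ← Finset.prod_mul_distrib,
    expand_mk_one_mul_one_sub_X_pow_eq_one, Finset.prod_const_one]

end Denumerant

end WeightedSums

/-- The hive for `GL(2)` with prescribed slacks: `n 0`, `n 1`, `n 2` are the slacks
`h₂₁ + h₂₂ - h₃₂ - h₁₁`, `h₃₂ + h₂₂ - h₃₃ - h₂₁`, `h₂₁ + h₃₂ - h₃₁ - h₂₂` of the rhombus conditions,
`n 3 = b₂ = h₃₁ - h₂₁` and `n 4 = c₂ = h₃₃ - h₃₂`. -/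
def hiveOfSlacks (n : Fin 5 → ℕ) : Fin 6 → ℤ :=
  ![0,
    n 0 + n 2 + n 3,
    n 0 + n 1 + n 2 + n 3 + n 4,
    n 0 + n 2 + 2 * n 3,
    n 0 + n 1 + 2 * n 2 + 2 * n 3 + n 4,
    n 0 + n 1 + 2 * n 2 + 2 * n 3 + 2 * n 4]

/-- The weights with which the slack coordinates of a hive for `GL(2)` contribute to `h₃₃`. -/
def slackWeight : Fin 5 → ℕ := ![1, 1, 2, 2, 2]

theorem slackWeight_ne_zero (i : Fin 5) : slackWeight i ≠ 0 := by
  fin_cases i <;> decide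

theorem hiveOfSlacks_apply_five (n : Fin 5 → ℕ) :
    hiveOfSlacks n 5 = ((∑ i, slackWeight i * n i : ℕ) : ℤ) := by
  simp [hiveOfSlacks, slackWeight, Fin.sum_univ_five]

theorem hiveOfSlacks_injective : Function.Injective hiveOfSlacks := by
  intro m n h
  have h1 := congrFun h 1
  have h2 := congrFun h 2
  have h3 := congrFun h 3
  have h4 := congrFun h 4
  have h5 := congrFun h 5
  simp only [hiveOfSlacks, Matrix.cons_val] at h1 h2 h3 h4 h5
  ext i
  fin_cases i <;> simp only [Fin.reduceFinMk, Fin.zero_eta, Fin.mk_one] <;> omega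

theorem isHive2_hiveOfSlacks (n : Fin 5 → ℕ) : IsHive2 (hiveOfSlacks n) := by
  simp only [IsHive2, hiveOfSlacks, Matrix.cons_val, true_and]
  omega

theorem IsHive2.exists_hiveOfSlacks_eq {h : Fin 6 → ℤ} (hh : IsHive2 h) :
    ∃ n, hiveOfSlacks n = h := by
  obtain ⟨h₁₁, rhombus₂, rhombus₀, rhombus₁, -, -, -, hb, -, hc⟩ := hh
  refine ⟨![(h 1 + h 2 - h 4).toNat, (h 4 + h 2 - h 5 - h 1).toNat,
    (h 1 + h 4 - h 3 - h 2).toNat, (h 3 - h 1).toNat, (h 5 - h 4).toNat], ?_⟩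
  ext i
  fin_cases i <;>
    simp only [hiveOfSlacks, Matrix.cons_val, Fin.reduceFinMk, Fin.zero_eta, Fin.mk_one] <;> omega

theorem hiveCount2_eq_denumerant (d : ℕ) : hiveCount2 d = denumerant slackWeight d := by
  rw [hiveCount2, denumerant, ← Set.ncard_image_of_injective _ hiveOfSlacks_injective]
  congr 1
  ext h
  constructor
  · rintro ⟨hh, hd⟩
    obtain ⟨n, rfl⟩ := hh.exists_hiveOfSlacks_eq
    exact ⟨n, by exact_mod_cast (hiveOfSlacks_apply_five n).symm.trans hd, rfl⟩
  · rintro ⟨n, hn, rfl⟩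
    exact ⟨isHive2_hiveOfSlacks n, (hiveOfSlacks_apply_five n).trans (congrArg _ hn)⟩

section GeneratingFunction

open PowerSeries

theorem mk_hiveCount2_mul_eq_one :
    (mk fun d => (hiveCount2 d : ℤ)) * ((1 - X) ^ 2 * (1 - X ^ 2) ^ 3) = 1 := by
  have prod_eq : ∏ i, (1 - X ^ slackWeight i : ℤ⟦X⟧) = (1 - X) ^ 2 * (1 - X ^ 2) ^ 3 := by
    simp only [slackWeight, Fin.prod_univ_five, Matrix.cons_val]
    ring
  simp only [hiveCount2_eq_denumerant, ← prod_eq]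
  exact mk_denumerant_mul_prod_one_sub_X_pow_eq_one slackWeight_ne_zero

theorem mk_hiveCount2_eq_expand_add_X_mul_expand :
    (mk fun d => (hiveCount2 d : ℤ)) =
      expand 2 two_ne_zero (mk fun k => ((4 + k).choose 4 + (3 + k).choose 4 : ℤ)) +
        X * expand 2 two_ne_zero (mk fun k => (2 * (4 + k).choose 4 : ℤ)) := by
  set S : ℤ⟦X⟧ := mk fun k => ((4 + k).choose 4 : ℤ) with S_def
  have expand_S_mul : expand 2 two_ne_zero S * (1 - X ^ 2) ^ 5 = 1 := by
    simpa using congrArg (expand 2 two_ne_zero) (mk_add_choose_mul_one_sub_pow_eq_one ℤ 4)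
  have even_part : mk (fun k => ((4 + k).choose 4 + (3 + k).choose 4 : ℤ)) = S + X * S := by
    rw [S_def, X_mul_mk_add_choose 3]
    rfl
  have odd_part : mk (fun k => (2 * (4 + k).choose 4 : ℤ)) = S + S := by
    ext k
    simp [S_def, two_mul]
  rw [even_part, odd_part]
  simp only [map_mul, map_add, expand_X]
  set T := expand 2 two_ne_zero S
  refine left_inv_eq_right_inv mk_hiveCount2_mul_eq_one ?_
  calc (1 - X) ^ 2 * (1 - X ^ 2) ^ 3 * (T + X ^ 2 * T + X * (T + T))
      = T * (((1 - X) * (1 + X)) ^ 2 * (1 - X ^ 2) ^ 3) := by ring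
    _ = T * (1 - X ^ 2) ^ 5 := by ring
    _ = 1 := expand_S_mul

theorem hiveCount2_two_mul (k : ℕ) :
    hiveCount2 (2 * k) = (4 + k).choose 4 + (3 + k).choose 4 := by
  have h := congrArg (coeff (2 * k)) mk_hiveCount2_eq_expand_add_X_mul_expand
  rw [coeff_two_mul_expand_add_X_mul_expand, coeff_mk, coeff_mk] at h
  exact_mod_cast h

theorem hiveCount2_two_mul_add_one (k : ℕ) :
    hiveCount2 (2 * k + 1) = 2 * (4 + k).choose 4 := by
  have h := congrArg (coeff (2 * k + 1)) mk_hiveCount2_eq_expand_add_X_mul_expand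
  rw [coeff_two_mul_add_one_expand_add_X_mul_expand, coeff_mk, coeff_mk] at h
  exact_mod_cast h

end GeneratingFunction

/-- The generating function of the numbers of hives for `GL(2)` with `h₃₃ = d`
satisfies `(Σ m_d t^d) (1-t)² (1-t²)³ = 1`; in particular
`m₀, ..., m₉ = 1, 2, 6, 10, 20, 30, 50, 70, 105, 140`. -/
theorem hiveCount2_generating_function :
    (PowerSeries.mk fun d => (hiveCount2 d : ℤ)) *
      ((1 - PowerSeries.X) ^ 2 * (1 - PowerSeries.X ^ 2) ^ 3) = 1 ∧
    hiveCount2 0 = 1 ∧ hiveCount2 1 = 2 ∧ hiveCount2 2 = 6 ∧ hiveCount2 3 = 10 ∧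
    hiveCount2 4 = 20 ∧ hiveCount2 5 = 30 ∧ hiveCount2 6 = 50 ∧ hiveCount2 7 = 70 ∧
    hiveCount2 8 = 105 ∧ hiveCount2 9 = 140 := by
  exact ⟨mk_hiveCount2_mul_eq_one,
    hiveCount2_two_mul 0, hiveCount2_two_mul_add_one 0,
    hiveCount2_two_mul 1, hiveCount2_two_mul_add_one 1,
    hiveCount2_two_mul 2, hiveCount2_two_mul_add_one 2,
    hiveCount2_two_mul 3, hiveCount2_two_mul_add_one 3,
    hiveCount2_two_mul 4, hiveCount2_two_mul_add_one 4⟩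
end

section
/- The monoid H(3) of hives for GL(3) is generated as a commutative monoid by the following ten hives (written as tuples (h_{11}, h_{21}, h_{22}, h_{31}, h_{32}, h_{33}, h_{41}, h_{42}, h_{43}, h_{44})): h_1 = (0,0,1,0,1,1,0,1,1,1), h_2 = (0,0,1,0,1,2,0,1,2,3), h_3 = (0,0,1,0,1,2,0,1,2,2), h_4 = (0,1,1,1,1,1,1,1,1,1), h_5 = (0,1,1,1,2,2,1,2,2,2), h_6 = (0,1,1,1,2,2,1,2,3,3), h_7 = (0,1,1,2,2,2,2,2,2,2), h_8 = (0,1,1,2,2,2,2,3,3,3), h_9 = (0,1,1,2,2,2,3,3,3,3), h_10 = (0,1,2,2,3,3,2,3,4,4). That is, every hive for GL(3) is an N-linear combination of h_1, ..., h_10. -/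
/-- A hive for `GL(3)`, written as a tuple
`(h₁₁, h₂₁, h₂₂, h₃₁, h₃₂, h₃₃, h₄₁, h₄₂, h₄₃, h₄₄)` (indices `0,...,9`):
`h₁₁ = 0`, the rhombus conditions hold, and the three boundary sequences are
non-negative dominant. -/
def IsHive3 (h : Fin 10 → ℤ) : Prop :=
  h 0 = 0 ∧
  -- rhombus conditions of the first type
  h 3 + h 2 ≤ h 1 + h 4 ∧
  h 6 + h 4 ≤ h 3 + h 7 ∧
  h 7 + h 5 ≤ h 4 + h 8 ∧
  -- rhombus conditions of the second type
  h 4 + h 0 ≤ h 1 + h 2 ∧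
  h 7 + h 1 ≤ h 3 + h 4 ∧
  h 8 + h 2 ≤ h 4 + h 5 ∧
  -- rhombus conditions of the third type
  h 5 + h 1 ≤ h 4 + h 2 ∧
  h 8 + h 3 ≤ h 7 + h 4 ∧
  h 9 + h 4 ≤ h 8 + h 5 ∧
  -- boundary sequence a: (h₂₂ - h₁₁, h₃₃ - h₂₂, h₄₄ - h₃₃)
  h 5 - h 2 ≤ h 2 - h 0 ∧ h 9 - h 5 ≤ h 5 - h 2 ∧ 0 ≤ h 9 - h 5 ∧
  -- boundary sequence b: (h₂₁ - h₁₁, h₃₁ - h₂₁, h₄₁ - h₃₁)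
  h 3 - h 1 ≤ h 1 - h 0 ∧ h 6 - h 3 ≤ h 3 - h 1 ∧ 0 ≤ h 6 - h 3 ∧
  -- boundary sequence c: (h₄₂ - h₄₁, h₄₃ - h₄₂, h₄₄ - h₄₃)
  h 8 - h 7 ≤ h 7 - h 6 ∧ h 9 - h 8 ≤ h 8 - h 7 ∧ 0 ≤ h 9 - h 8

/-- The ten generating hives of the hive monoid `H(3)`. -/
def hive3Gens : Fin 10 → Fin 10 → ℤ :=
  ![![0,0,1,0,1,1,0,1,1,1],
    ![0,0,1,0,1,2,0,1,2,3],
    ![0,0,1,0,1,2,0,1,2,2],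
    ![0,1,1,1,1,1,1,1,1,1],
    ![0,1,1,1,2,2,1,2,2,2],
    ![0,1,1,1,2,2,1,2,3,3],
    ![0,1,1,2,2,2,2,2,2,2],
    ![0,1,1,2,2,2,2,3,3,3],
    ![0,1,1,2,2,2,3,3,3,3],
    ![0,1,2,2,3,3,2,3,4,4]]

/-!
`h₁, ..., h₉` form a `ℤ`-basis of the lattice of arrays with `h₁₁ = 0`. In this basis every
coordinate of a hive is one of the defining inequalities, hence nonnegative, except the coordinate
`c` at `h₅`. If `c < 0`, adding `-c` times the relation `h₅ + h₁₀ - h₁ - h₆ - h₇ = 0` makes the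
coefficient of `h₅` vanish and that of `h₁₀` positive; the coefficients of `h₁`, `h₆`, `h₇` stay
nonnegative because they turn into the three other rhombus inequalities around `h₃₂`.
-/

/-- The coordinates of `h` in the `ℤ`-basis `h₁, ..., h₉` of the lattice `{h | h 0 = 0}`. They are
indexed from `0`, as in `hive3Gens`; the entry at `9` is a zero coefficient for `h₁₀`. -/
def hive3Coord (h : Fin 10 → ℤ) : Fin 10 → ℤ :=
  ![h 2 + h 4 - h 1 - h 5,
    h 9 - h 8,
    h 5 + h 8 - h 4 - h 9,
    h 1 + h 2 - h 4,
    h 1 + h 5 + h 7 - h 2 - h 3 - h 8,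
    h 4 + h 8 - h 5 - h 7,
    h 3 + h 4 - h 1 - h 7,
    h 3 + h 7 - h 4 - h 6,
    h 6 - h 3,
    0]

/-- The coefficients of the linear relation `h₅ + h₁₀ - h₁ - h₆ - h₇ = 0` between the generators,
used to trade a negative coefficient of `h₅` for a positive one of `h₁₀`. -/
def hive3Relation : Fin 10 → ℤ :=
  ![-1, 0, 0, 0, 1, -1, -1, 0, 0, 1]

theorem isHive3_hive3Gens (k : Fin 10) : IsHive3 (hive3Gens k) := by
  unfold IsHive3
  fin_cases k <;> decide

theorem linearCombination_hive3Coord {h : Fin 10 → ℤ} (h_zero : h 0 = 0) :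
    Fintype.linearCombination ℤ hive3Gens (hive3Coord h) = h := by
  ext j
  fin_cases j <;>
    simp +arith [Fintype.linearCombination_apply, Fin.sum_univ_succ, hive3Gens, hive3Coord, h_zero]

theorem linearCombination_hive3Relation :
    Fintype.linearCombination ℤ hive3Gens hive3Relation = 0 := by
  decide

theorem linearCombination_hive3Coord_add_smul_hive3Relation {h : Fin 10 → ℤ} (h_zero : h 0 = 0)
    (t : ℤ) : Fintype.linearCombination ℤ hive3Gens (hive3Coord h + t • hive3Relation) = h := by
  rw [map_add, map_smul, linearCombination_hive3Relation, smul_zero, add_zero,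
    linearCombination_hive3Coord h_zero]

namespace IsHive3

variable {h : Fin 10 → ℤ}

theorem hive3Coord_nonneg (hh : IsHive3 h) {k : Fin 10} (hk : k ≠ 4) : 0 ≤ hive3Coord h k := by
  obtain ⟨h_zero, -, first₂, first₃, second₁, second₂, -, third₁, -, third₃,
    -, -, -, -, -, b_last, -, -, c_last⟩ := hh
  fin_cases k <;> dsimp only [hive3Coord, Fin.reduceFinMk, Matrix.cons_val] at hk ⊢ <;> lia

theorem hive3Coord_add_hive3Coord_four_nonneg (hh : IsHive3 h) {k : Fin 10}
    (hk : hive3Relation k = -1) : 0 ≤ hive3Coord h k + hive3Coord h 4 := by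
  obtain ⟨-, first₁, -, -, -, -, second₃, -, third₂, -⟩ := hh
  obtain rfl | rfl | rfl : k = 0 ∨ k = 5 ∨ k = 6 := by decide +revert
  all_goals simp only [hive3Coord, Matrix.cons_val]; linarith

theorem exists_hive3Coord_add_smul_hive3Relation_nonneg (hh : IsHive3 h) :
    ∃ t : ℤ, 0 ≤ hive3Coord h + t • hive3Relation := by
  obtain h_four | h_four := le_total 0 (hive3Coord h 4)
  · refine ⟨0, fun k ↦ ?_⟩
    obtain rfl | hk := eq_or_ne k 4
    · simpa using h_four
    · simpa using hh.hive3Coord_nonneg hk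
  · refine ⟨-hive3Coord h 4, fun k ↦ ?_⟩
    obtain rfl | hk := eq_or_ne k 4
    · simp [hive3Relation]
    by_cases h_neg : hive3Relation k = -1
    · simpa [h_neg] using hh.hive3Coord_add_hive3Coord_four_nonneg h_neg
    · have h_nonneg : 0 ≤ hive3Relation k := by decide +revert
      exact add_nonneg (hh.hive3Coord_nonneg hk) (mul_nonneg (neg_nonneg.2 h_four) h_nonneg)

end IsHive3

/-- The monoid `H(3)` of hives for `GL(3)` is generated as a commutative monoid by the
ten hives `h₁, ..., h₁₀`: each of them is a hive, and every hive for `GL(3)` is an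
`ℕ`-linear combination of them. -/
theorem hive3_generation :
    (∀ k : Fin 10, IsHive3 (hive3Gens k)) ∧
    (∀ h : Fin 10 → ℤ, IsHive3 h →
      ∃ m : Fin 10 → ℕ, h = fun j => ∑ k : Fin 10, (m k : ℤ) * hive3Gens k j) := by
  refine ⟨isHive3_hive3Gens, fun h hh ↦ ?_⟩
  obtain ⟨t, h_nonneg⟩ := hh.exists_hive3Coord_add_smul_hive3Relation_nonneg
  have h_eq := linearCombination_hive3Coord_add_smul_hive3Relation hh.1 t
  choose m hm using fun k ↦ Int.eq_ofNat_of_zero_le (h_nonneg k)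
  refine ⟨m, funext fun j ↦ ?_⟩
  simpa only [Fintype.linearCombination_apply, Finset.sum_apply, Pi.smul_apply, smul_eq_mul, hm]
    using (congrFun h_eq j).symm
end

section
/- For each natural number d, let m_d denote the number of hives h for GL(3) with h_{44} = d. Then the generating function identity (Σ_{d ≥ 0} m_d t^d) · (1−t)^2 (1−t^2)^3 (1−t^3)^4 (1−t^4) = 1 − t^6 holds in the ring of formal power series Z[[t]]. In particular m_0 = 1, m_1 = 2, m_2 = 6, m_3 = 14, m_4 = 29, m_5 = 56, m_6 = 105, m_7 = 182, m_8 = 308, m_9 = 502. -/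
/-- `hiveCount3 d` is the number of hives for `GL(3)` with top entry `h₄₄ = d`. -/
noncomputable def hiveCount3 (d : ℕ) : ℕ :=
  Set.ncard {h : Fin 10 → ℤ | IsHive3 h ∧ h 9 = (d : ℤ)}

/-!
The interior entry `h₃₂` is an obtuse corner of six rhombi, which come in three opposite pairs; the
two slacks in each pair differ by the same integer `δ`. The positive and negative parts of `δ`, the
smaller slack of each pair, the slacks of the three other rhombi, `h₄₁ - h₃₁` and `h₄₄ - h₄₃` are
ten natural numbers that determine the hive. They are its exponents with respect to ten generating
hives, of degrees 1, 1, 2, 2, 2, 3, 3, 3, 3, 4, and since one part of `δ` is zero, they avoid the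
product of the two generators attached to `δ`. So hives correspond to the monomials in ten weighted
variables not divisible by one monomial of degree 2 + 4 = 6. Translation by a vector of weight `k`
multiplies a weight series by `X ^ k`; this gives both the factor `1 - X ^ 6` for the excluded
multiples and the factors `1 - X ^ wᵢ` in the denominator.
-/

open PowerSeries Set

section WeightSeries

variable {α β : Type*}

/-- The generating function of a set `S` with respect to a weight `wt`: the coefficient of `X ^ d`
is the number of elements of `S` of weight `d`. It is meaningful when these numbers are finite; an
infinite weight class is counted as `0`. -/
noncomputable def weightSeries (S : Set α) (wt : α → ℕ) : ℤ⟦X⟧ :=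
  PowerSeries.mk fun d => ((S ∩ wt ⁻¹' {d}).ncard : ℤ)

lemma weightSeries_image {S : Set α} {wt : α → ℕ} {wt' : β → ℕ} {f : α → β} {k : ℕ}
    (hinj : InjOn f S) (hwt : ∀ x ∈ S, wt' (f x) = wt x + k) :
    weightSeries (f '' S) wt' = weightSeries S wt * X ^ k := by
  ext d
  rw [coeff_mul_X_pow', weightSeries, weightSeries, coeff_mk]
  split_ifs with hkd
  · have himage : f '' S ∩ wt' ⁻¹' {d} = f '' (S ∩ wt ⁻¹' {d - k}) := by
      rw [← image_inter_preimage]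
      congr 1
      ext x
      simp only [mem_inter_iff, mem_preimage, mem_singleton_iff]
      exact and_congr_right fun hx => by rw [hwt x hx]; omega
    rw [himage, (hinj.mono inter_subset_left).ncard_image, coeff_mk]
  · have hempty : f '' S ∩ wt' ⁻¹' {d} = ∅ := by
      rw [eq_empty_iff_forall_notMem]
      rintro _ ⟨⟨x, hx, rfl⟩, hd : wt' (f x) = d⟩
      have := hwt x hx
      omega
    rw [hempty, ncard_empty, Nat.cast_zero]

lemma weightSeries_sdiff {S T : Set α} {wt : α → ℕ} (hTS : T ⊆ S)
    (hfin : ∀ d, (S ∩ wt ⁻¹' {d}).Finite) :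
    weightSeries (S \ T) wt = weightSeries S wt - weightSeries T wt := by
  ext d
  have hcard := ncard_sdiff_add_ncard_of_subset
    (inter_subset_inter_left (wt ⁻¹' {d}) hTS) (hfin d)
  rw [← inter_sdiff_distrib_right] at hcard
  simp only [weightSeries, map_sub, coeff_mk]
  omega

lemma weightSeries_mul_one_sub_X_pow {S : Set α} {wt : α → ℕ} {f : α → α} {k : ℕ}
    (hfin : ∀ d, (S ∩ wt ⁻¹' {d}).Finite) (hmaps : MapsTo f S S) (hinj : InjOn f S)
    (hwt : ∀ x ∈ S, wt (f x) = wt x + k) :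
    weightSeries S wt * (1 - X ^ k) = weightSeries (S \ f '' S) wt := by
  rw [weightSeries_sdiff hmaps.image_subset hfin, weightSeries_image hinj hwt, mul_sub, mul_one]

end WeightSeries

section Monomials

variable {ι : Type*} [Fintype ι] {w : ι → ℕ}

lemma finite_setOf_dotProduct_eq (hw : ∀ i, 0 < w i) (d : ℕ) :
    {n : ι → ℕ | n ⬝ᵥ w = d}.Finite := by
  classical
  refine (finite_Iic fun _ => d).subset fun n hn i => ?_
  calc n i ≤ n i * w i := Nat.le_mul_of_pos_right _ (hw i)
    _ ≤ n ⬝ᵥ w :=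
      Finset.single_le_sum (f := fun i => n i * w i) (fun _ _ => Nat.zero_le _) (Finset.mem_univ i)
    _ = d := hn

lemma weightSeries_mul_one_sub_X_pow_dotProduct (hw : ∀ i, 0 < w i) {S : Set (ι → ℕ)}
    {r : ι → ℕ} (hS : ∀ n, n + r ∈ S ↔ n ∈ S) :
    weightSeries S (· ⬝ᵥ w) * (1 - X ^ (r ⬝ᵥ w)) =
      weightSeries {n ∈ S | ¬ r ≤ n} (· ⬝ᵥ w) := by
  rw [weightSeries_mul_one_sub_X_pow (f := (· + r))
    (fun d => (finite_setOf_dotProduct_eq hw d).subset inter_subset_right)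
    (fun n hn => (hS n).2 hn) (add_left_injective r).injOn fun n _ => add_dotProduct n r w]
  congr 1
  ext n
  simp only [mem_sdiff, mem_image, mem_ofPred_eq, and_congr_right_iff, not_iff_not]
  intro hn
  constructor
  · rintro ⟨m, -, rfl⟩
    exact le_add_self
  · intro hr
    have hsub : n - r + r = n := tsub_add_cancel_of_le hr
    exact ⟨n - r, (hS _).1 (hsub.symm ▸ hn), hsub⟩

lemma weightSeries_univ_mul_prod_one_sub_X_pow_finset (hw : ∀ i, 0 < w i) (s : Finset ι) :
    weightSeries univ (· ⬝ᵥ w) * ∏ i ∈ s, (1 - X ^ w i) =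
      weightSeries {n : ι → ℕ | ∀ i ∈ s, n i = 0} (· ⬝ᵥ w) := by
  classical
  induction s using Finset.induction_on with
  | empty => simp
  | insert a s ha ih =>
    have hS (n : ι → ℕ) : n + Pi.single a 1 ∈ {n : ι → ℕ | ∀ i ∈ s, n i = 0} ↔
        n ∈ {n : ι → ℕ | ∀ i ∈ s, n i = 0} :=
      forall₂_congr fun i hi => by simp [ne_of_mem_of_not_mem hi ha]
    have hweight : (Pi.single a 1 : ι → ℕ) ⬝ᵥ w = w a := single_one_dotProduct a w
    rw [Finset.prod_insert ha, mul_left_comm, ih, mul_comm, ← hweight,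
      weightSeries_mul_one_sub_X_pow_dotProduct hw hS]
    congr 1
    ext n
    have hsingle : Pi.single a 1 ≤ n ↔ 1 ≤ n a := by
      simp [Pi.single, update_le_iff]
    simp [hsingle, and_comm]

theorem weightSeries_univ_mul_prod_one_sub_X_pow (hw : ∀ i, 0 < w i) :
    weightSeries univ (· ⬝ᵥ w) * ∏ i, (1 - X ^ w i) = 1 := by
  rw [weightSeries_univ_mul_prod_one_sub_X_pow_finset hw]
  have hsingleton : {n : ι → ℕ | ∀ i ∈ Finset.univ, n i = 0} = {0} := by
    ext n
    simp [funext_iff]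
  ext d
  rw [hsingleton, weightSeries, coeff_mk, coeff_one]
  by_cases hd : d = 0
  · simp [hd]
  · simp [hd, Ne.symm hd]

theorem weightSeries_not_le_mul_prod_one_sub_X_pow (hw : ∀ i, 0 < w i) (r : ι → ℕ) :
    weightSeries {n | ¬ r ≤ n} (· ⬝ᵥ w) * ∏ i, (1 - X ^ w i) = 1 - X ^ (r ⬝ᵥ w) := by
  have hremove := weightSeries_mul_one_sub_X_pow_dotProduct hw (S := univ) (r := r) (by simp)
  simp only [mem_univ, true_and] at hremove
  rw [← hremove, mul_right_comm, weightSeries_univ_mul_prod_one_sub_X_pow hw, one_mul]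

end Monomials

/-- Eleven quantities, additive in `h`, whose non-negativity together with `h 0 = 0` characterizes
hives: the slacks of the three pairs of opposite rhombi with an obtuse corner at the interior entry
`h 4` (entries 0–5), of the other three rhombi (entries 6–8), and the boundary differences
`h₄₄ - h₄₃` and `h₄₁ - h₃₁`. -/
def hiveSlack (h : Fin 10 → ℤ) : Fin 11 → ℤ :=
  ![h 2 + h 4 - h 1 - h 5, h 4 + h 7 - h 3 - h 8,
    h 3 + h 4 - h 1 - h 7, h 4 + h 5 - h 2 - h 8,
    h 4 + h 8 - h 5 - h 7, h 1 + h 4 - h 2 - h 3,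
    h 1 + h 2 - h 0 - h 4, h 5 + h 8 - h 4 - h 9, h 3 + h 7 - h 4 - h 6,
    h 9 - h 8, h 6 - h 3]

/-- The ten generators of the monoid of hives, in the coordinates of `IsHive3`. They satisfy the
single relation `g₃ + g₉ = g₀ + g₄ + g₆`. -/
def hiveGenerator : Fin 10 → Fin 10 → ℤ :=
  ![![0, 0, 1, 0, 1, 1, 0, 1, 1, 1],
    ![0, 1, 1, 1, 1, 1, 1, 1, 1, 1],
    ![0, 0, 1, 0, 1, 2, 0, 1, 2, 2],
    ![0, 1, 1, 1, 2, 2, 1, 2, 2, 2],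
    ![0, 1, 1, 2, 2, 2, 2, 2, 2, 2],
    ![0, 0, 1, 0, 1, 2, 0, 1, 2, 3],
    ![0, 1, 1, 1, 2, 2, 1, 2, 3, 3],
    ![0, 1, 1, 2, 2, 2, 2, 3, 3, 3],
    ![0, 1, 1, 2, 2, 2, 3, 3, 3, 3],
    ![0, 1, 2, 2, 3, 3, 2, 3, 4, 4]]

/-- The degrees of the generators, that is, their entries `h₄₄`. -/
def hiveGeneratorDegree : Fin 10 → ℕ := ![1, 1, 2, 2, 2, 3, 3, 3, 3, 4]

/-- The exponent vector of `g₃ + g₉`, the side of the relation between the generators that normal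
forms avoid. -/
def hiveRelation : Fin 10 → ℕ := ![0, 0, 0, 1, 0, 0, 0, 0, 0, 1]

/-- The hive with exponents `n` with respect to the generators. -/
def hiveOfExponents (n : Fin 10 → ℕ) : Fin 10 → ℤ := ∑ i, n i • hiveGenerator i

/-- The exponents of the normal form of a hive. Entries 0, 4, 6 are the smaller slack in each pair
of opposite rhombi, and entries 9, 3 are the positive and negative parts of the difference within a
pair, which is the same for all three. -/
def hiveExponents (h : Fin 10 → ℤ) : Fin 10 → ℕ :=
  let s := hiveSlack h
  ![(min (s 0) (s 1)).toNat, (s 6).toNat, (s 7).toNat, (s 5 - s 4).toNat,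
    (min (s 2) (s 3)).toNat, (s 9).toNat, (min (s 4) (s 5)).toNat, (s 8).toNat, (s 10).toNat,
    (s 4 - s 5).toNat]

lemma hiveRelation_le_iff {n : Fin 10 → ℕ} : hiveRelation ≤ n ↔ 1 ≤ n 3 ∧ 1 ≤ n 9 := by
  simp [Pi.le_def, Fin.forall_fin_succ, hiveRelation]

lemma isHive3_iff_hiveSlack_nonneg {h : Fin 10 → ℤ} :
    IsHive3 h ↔ h 0 = 0 ∧ ∀ i, 0 ≤ hiveSlack h i := by
  simp only [IsHive3, hiveSlack, Fin.forall_fin_succ, Matrix.cons_val_zero, Matrix.cons_val_succ,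
    IsEmpty.forall_iff, and_true]
  omega

lemma eq_of_hiveSlack_eq {g h : Fin 10 → ℤ} (hzero : g 0 = h 0)
    (hslack : hiveSlack g = hiveSlack h) : g = h := by
  simp only [hiveSlack, Matrix.vecCons_inj] at hslack
  ext i
  fin_cases i <;> simp only [Fin.reduceFinMk] <;> omega

lemma hiveOfExponents_zero (n : Fin 10 → ℕ) : hiveOfExponents n 0 = 0 := by
  have hgenerator (i : Fin 10) : hiveGenerator i 0 = 0 := by
    revert i; decide
  simp [hiveOfExponents, hgenerator]

lemma hiveOfExponents_nine (n : Fin 10 → ℕ) :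
    hiveOfExponents n 9 = (n ⬝ᵥ hiveGeneratorDegree : ℕ) := by
  have hdegree (i : Fin 10) : hiveGenerator i 9 = hiveGeneratorDegree i := by
    revert i; decide
  simp [hiveOfExponents, dotProduct, hdegree]

lemma hiveSlack_hiveOfExponents (n : Fin 10 → ℕ) :
    hiveSlack (hiveOfExponents n) =
      fun i => ((![n 0 + n 9, n 0 + n 3, n 4 + n 9, n 4 + n 3, n 6 + n 9, n 6 + n 3,
        n 1, n 2, n 7, n 5, n 8] : Fin 11 → ℕ) i : ℤ) := by
  simp only [hiveSlack, hiveOfExponents, hiveGenerator, Finset.sum_apply,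
    nsmul_eq_mul, Fin.sum_univ_succ]
  ext i
  fin_cases i <;>
    simp only [Fin.zero_eta, Fin.mk_one, Fin.reduceFinMk, Matrix.cons_val, Matrix.cons_val_succ,
      Pi.mul_apply, Pi.natCast_apply, Fin.succ_zero_eq_one, Fin.succ_one_eq_two, Fin.reduceSucc,
      Finset.univ_eq_empty, Finset.sum_empty, Nat.cast_add] <;>
    ring

lemma isHive3_hiveOfExponents (n : Fin 10 → ℕ) : IsHive3 (hiveOfExponents n) := by
  rw [isHive3_iff_hiveSlack_nonneg, hiveSlack_hiveOfExponents]
  exact ⟨hiveOfExponents_zero n, fun i => Nat.cast_nonneg _⟩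

lemma not_hiveRelation_le_hiveExponents (h : Fin 10 → ℤ) : ¬ hiveRelation ≤ hiveExponents h := by
  rw [hiveRelation_le_iff]
  change ¬ (1 ≤ (hiveSlack h 5 - hiveSlack h 4).toNat ∧ 1 ≤ (hiveSlack h 4 - hiveSlack h 5).toNat)
  omega

lemma hiveExponents_hiveOfExponents {n : Fin 10 → ℕ} (hn : ¬ hiveRelation ≤ n) :
    hiveExponents (hiveOfExponents n) = n := by
  rw [hiveRelation_le_iff] at hn
  rw [hiveExponents, hiveSlack_hiveOfExponents]
  ext i
  fin_cases i <;> simp only [Fin.zero_eta, Fin.mk_one, Fin.reduceFinMk, Matrix.cons_val] <;> omega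

lemma hiveSlack_sub_eq (h : Fin 10 → ℤ) :
    hiveSlack h 0 - hiveSlack h 1 = hiveSlack h 4 - hiveSlack h 5 ∧
      hiveSlack h 2 - hiveSlack h 3 = hiveSlack h 4 - hiveSlack h 5 := by
  constructor <;> simp only [hiveSlack, Matrix.cons_val] <;> ring

lemma hiveOfExponents_hiveExponents {h : Fin 10 → ℤ} (hh : IsHive3 h) :
    hiveOfExponents (hiveExponents h) = h := by
  obtain ⟨hzero, hnonneg⟩ := isHive3_iff_hiveSlack_nonneg.1 hh
  obtain ⟨hpair₀, hpair₂⟩ := hiveSlack_sub_eq h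
  refine eq_of_hiveSlack_eq ((hiveOfExponents_zero _).trans hzero.symm) ?_
  rw [hiveSlack_hiveOfExponents]
  ext i
  fin_cases i <;>
    simp only [hiveExponents, Fin.zero_eta, Fin.mk_one, Fin.reduceFinMk, Matrix.cons_val,
      Nat.cast_add, Int.ofNat_toNat] <;>
    grind

theorem bijOn_hiveOfExponents :
    BijOn hiveOfExponents {n | ¬ hiveRelation ≤ n} {h | IsHive3 h} :=
  InvOn.bijOn
    ⟨fun _ hn => hiveExponents_hiveOfExponents hn, fun _ hh => hiveOfExponents_hiveExponents hh⟩
    (fun n _ => isHive3_hiveOfExponents n)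
    fun h _ => not_hiveRelation_le_hiveExponents h

lemma weightSeries_setOf_isHive3 :
    weightSeries {h | IsHive3 h} (fun h => (h 9).toNat) =
      weightSeries {n | ¬ hiveRelation ≤ n} (· ⬝ᵥ hiveGeneratorDegree) := by
  rw [← bijOn_hiveOfExponents.image_eq, weightSeries_image (k := 0) bijOn_hiveOfExponents.injOn
    fun n _ => by rw [hiveOfExponents_nine, Int.toNat_natCast, add_zero], pow_zero, mul_one]

lemma mk_hiveCount3 :
    PowerSeries.mk (fun d => (hiveCount3 d : ℤ)) =
      weightSeries {h | IsHive3 h} (fun h => (h 9).toNat) := by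
  ext d
  rw [weightSeries, coeff_mk, coeff_mk, hiveCount3]
  congr 2
  ext h
  refine and_congr_right fun hh => ?_
  change _ ↔ (h 9).toNat = d
  unfold IsHive3 at hh
  omega

/-- The coefficients of the polynomial `(1 - X) ^ 2 (1 - X ^ 2) ^ 3 (1 - X ^ 3) ^ 4 (1 - X ^ 4)`. -/
def denominatorCoeff : Fin 25 → ℤ :=
  ![1, -2, -2, 2, 7, 4, -14, -12, 3, 22, 16, -14, -22, -14, 16, 22, 3, -12, -14, 4, 7, 2, -2, -2, 1]

lemma denominator_eq_sum :
    ((1 - X) ^ 2 * (1 - X ^ 2) ^ 3 * (1 - X ^ 3) ^ 4 * (1 - X ^ 4) : ℤ⟦X⟧) =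
      ∑ i, C (denominatorCoeff i) * X ^ (i : ℕ) := by
  simp only [Fin.sum_univ_succ, denominatorCoeff, Matrix.cons_val_zero, Matrix.cons_val_succ,
    Fin.val_zero, Fin.val_succ, Nat.reduceAdd, Finset.univ_eq_empty, Finset.sum_empty, eq_intCast,
    Int.cast_neg, Int.cast_ofNat, Int.cast_one]
  ring

lemma sum_denominatorCoeff_mul_eq_coeff {a : ℕ → ℤ} {p : ℤ⟦X⟧}
    (ha : PowerSeries.mk a *
      ((1 - X) ^ 2 * (1 - X ^ 2) ^ 3 * (1 - X ^ 3) ^ 4 * (1 - X ^ 4)) = p) (d : ℕ) :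
    ∑ i, denominatorCoeff i * (if (i : ℕ) ≤ d then a (d - i) else 0) = coeff d p := by
  rw [← ha, denominator_eq_sum, Finset.mul_sum, map_sum]
  exact Finset.sum_congr rfl fun i _ => by
    rw [mul_left_comm, coeff_C_mul, coeff_mul_X_pow', coeff_mk]

lemma eq_of_mk_mul_denominator_eq {a : ℕ → ℤ}
    (ha : PowerSeries.mk a *
      ((1 - X) ^ 2 * (1 - X ^ 2) ^ 3 * (1 - X ^ 3) ^ 4 * (1 - X ^ 4)) = 1 - X ^ 6) :
    a 0 = 1 ∧ a 1 = 2 ∧ a 2 = 6 ∧ a 3 = 14 ∧ a 4 = 29 ∧ a 5 = 56 ∧ a 6 = 105 ∧ a 7 = 182 ∧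
      a 8 = 308 ∧ a 9 = 502 := by
  have hrec (d : Fin 10) := sum_denominatorCoeff_mul_eq_coeff ha d
  simp only [Fin.forall_fin_succ, Fin.sum_univ_succ, denominatorCoeff, Matrix.cons_val_zero,
    Matrix.cons_val_succ, Fin.val_zero, Fin.val_succ, Nat.reduceAdd, Nat.reduceLeDiff,
    Nat.reduceSub, Nat.reduceEqDiff, ↓reduceIte, map_sub, coeff_one, coeff_X_pow,
    Finset.univ_eq_empty, Finset.sum_empty] at hrec
  omega

/-- The generating function of the numbers of hives for `GL(3)` with `h₄₄ = d`
satisfies `(Σ m_d t^d) (1-t)² (1-t²)³ (1-t³)⁴ (1-t⁴) = 1 - t⁶`; in particular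
`m₀, ..., m₉ = 1, 2, 6, 14, 29, 56, 105, 182, 308, 502`. -/
theorem hiveCount3_generating_function :
    (PowerSeries.mk fun d => (hiveCount3 d : ℤ)) *
      ((1 - PowerSeries.X) ^ 2 * (1 - PowerSeries.X ^ 2) ^ 3 *
        (1 - PowerSeries.X ^ 3) ^ 4 * (1 - PowerSeries.X ^ 4)) =
      1 - PowerSeries.X ^ 6 ∧
    hiveCount3 0 = 1 ∧ hiveCount3 1 = 2 ∧ hiveCount3 2 = 6 ∧ hiveCount3 3 = 14 ∧
    hiveCount3 4 = 29 ∧ hiveCount3 5 = 56 ∧ hiveCount3 6 = 105 ∧ hiveCount3 7 = 182 ∧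
    hiveCount3 8 = 308 ∧ hiveCount3 9 = 502 := by
  have hprod : (∏ i, (1 - X ^ hiveGeneratorDegree i) : ℤ⟦X⟧) =
      (1 - X) ^ 2 * (1 - X ^ 2) ^ 3 * (1 - X ^ 3) ^ 4 * (1 - X ^ 4) := by
    simp only [hiveGeneratorDegree, Fin.prod_univ_succ, Matrix.cons_val_zero, Matrix.cons_val_succ,
      Finset.univ_eq_empty, Finset.prod_empty]
    ring
  have hdegree : hiveRelation ⬝ᵥ hiveGeneratorDegree = 6 := by decide
  have hseries := weightSeries_not_le_mul_prod_one_sub_X_pow (w := hiveGeneratorDegree) (by decide)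
    hiveRelation
  rw [hprod, hdegree, ← weightSeries_setOf_isHive3, ← mk_hiveCount3] at hseries
  exact ⟨hseries, mod_cast eq_of_mk_mul_denominator_eq hseries⟩
end

section
/- The monoid H(4) of hives for GL(4) is generated as a commutative monoid by the twenty hives h_1, ..., h_20 listed in the context. That is, every hive for GL(4) is an N-linear combination of h_1, ..., h_20. -/
/-- A hive for `GL(4)`, written as a tuple
`(h₁₁, h₂₁, h₂₂, h₃₁, h₃₂, h₃₃, h₄₁, h₄₂, h₄₃, h₄₄, h₅₁, h₅₂, h₅₃, h₅₄, h₅₅)`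
(indices `0,...,14`): `h₁₁ = 0`, the rhombus conditions hold, and the three
boundary sequences are non-negative dominant. -/
def IsHive4 (h : Fin 15 → ℤ) : Prop :=
  h 0 = 0 ∧
  -- rhombus conditions of the first type
  h 3 + h 2 ≤ h 1 + h 4 ∧
  h 6 + h 4 ≤ h 3 + h 7 ∧
  h 7 + h 5 ≤ h 4 + h 8 ∧
  h 10 + h 7 ≤ h 6 + h 11 ∧
  h 11 + h 8 ≤ h 7 + h 12 ∧
  h 12 + h 9 ≤ h 8 + h 13 ∧
  -- rhombus conditions of the second type
  h 4 + h 0 ≤ h 1 + h 2 ∧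
  h 7 + h 1 ≤ h 3 + h 4 ∧
  h 8 + h 2 ≤ h 4 + h 5 ∧
  h 11 + h 3 ≤ h 6 + h 7 ∧
  h 12 + h 4 ≤ h 7 + h 8 ∧
  h 13 + h 5 ≤ h 8 + h 9 ∧
  -- rhombus conditions of the third type
  h 5 + h 1 ≤ h 4 + h 2 ∧
  h 8 + h 3 ≤ h 7 + h 4 ∧
  h 9 + h 4 ≤ h 8 + h 5 ∧
  h 12 + h 6 ≤ h 11 + h 7 ∧
  h 13 + h 7 ≤ h 12 + h 8 ∧
  h 14 + h 8 ≤ h 13 + h 9 ∧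
  -- boundary sequence a: (h₂₂ - h₁₁, h₃₃ - h₂₂, h₄₄ - h₃₃, h₅₅ - h₄₄)
  h 5 - h 2 ≤ h 2 - h 0 ∧ h 9 - h 5 ≤ h 5 - h 2 ∧ h 14 - h 9 ≤ h 9 - h 5 ∧ 0 ≤ h 14 - h 9 ∧
  -- boundary sequence b: (h₂₁ - h₁₁, h₃₁ - h₂₁, h₄₁ - h₃₁, h₅₁ - h₄₁)
  h 3 - h 1 ≤ h 1 - h 0 ∧ h 6 - h 3 ≤ h 3 - h 1 ∧ h 10 - h 6 ≤ h 6 - h 3 ∧ 0 ≤ h 10 - h 6 ∧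
  -- boundary sequence c: (h₅₂ - h₅₁, h₅₃ - h₅₂, h₅₄ - h₅₃, h₅₅ - h₅₄)
  h 12 - h 11 ≤ h 11 - h 10 ∧ h 13 - h 12 ≤ h 12 - h 11 ∧ h 14 - h 13 ≤ h 13 - h 12 ∧
  0 ≤ h 14 - h 13

/-- The twenty generating hives of the hive monoid `H(4)`. -/
def hive4Gens : Fin 20 → Fin 15 → ℤ :=
  ![![0,0,1,0,1,1,0,1,1,1,0,1,1,1,1],
    ![0,0,1,0,1,2,0,1,2,2,0,1,2,2,2],
    ![0,0,1,0,1,2,0,1,2,3,0,1,2,3,3],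
    ![0,0,1,0,1,2,0,1,2,3,0,1,2,3,4],
    ![0,1,1,1,1,1,1,1,1,1,1,1,1,1,1],
    ![0,1,1,1,2,2,1,2,2,2,1,2,2,2,2],
    ![0,1,1,1,2,2,1,2,3,3,1,2,3,3,3],
    ![0,1,1,1,2,2,1,2,3,3,1,2,3,4,4],
    ![0,1,1,2,2,2,2,2,2,2,2,2,2,2,2],
    ![0,1,1,2,2,2,2,3,3,3,2,3,3,3,3],
    ![0,1,1,2,2,2,2,3,3,3,2,3,4,4,4],
    ![0,1,1,2,2,2,3,3,3,3,3,3,3,3,3],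
    ![0,1,1,2,2,2,3,3,3,3,3,4,4,4,4],
    ![0,1,1,2,2,2,3,3,3,3,4,4,4,4,4],
    ![0,1,2,2,3,3,2,3,4,4,2,3,4,4,4],
    ![0,1,2,2,3,3,2,3,4,4,2,3,4,5,5],
    ![0,1,2,2,3,4,2,4,5,5,2,4,5,6,6],
    ![0,1,2,2,3,3,3,4,4,4,3,4,5,5,5],
    ![0,1,2,2,3,4,3,4,5,5,3,4,5,6,6],
    ![0,2,2,3,4,4,4,5,5,5,4,5,6,6,6]]

/-!
View a hive as a piecewise linear function on the triangulated triangle. The rhombus inequalities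
say that it bends concavely across every inner edge, by an amount called the gap of that edge. The
three inner vertices `h₃₂`, `h₄₃`, `h₄₂` form a triangle, and their spokes are all the inner edges
except the three that cut off the corners. Around an inner vertex `v`, the gaps on opposite spokes
differ by the same amount `±t v`. Hence the rhombus inequalities on the line through `v` and the
next inner vertex `v + 1` say that the gap between these two is at least
`max (t v)⁺ (t (v + 1))⁻`, and those on the line through `v` that avoids the other inner vertices
say that the gap on one of its spokes is at least `(t v)⁻`.

The excesses in these six bounds, the three corner gaps and the last parts of the boundary sequences
`b` and `c` are the multiplicities of eleven generators with `t = 0`. The other nine generators have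
`t = eᵥ`, `t = -eᵥ` and `t = eᵥ - eᵥ₊₁`. Since `max x y = x + y - min x y`, taking the last kind
`min (t v)⁺ (t (v + 1))⁻` times, and the first two kinds as often as is then needed to produce `t`,
accounts exactly for the six bounds.
-/

namespace Hive4

/-- The positions of the three inner vertices `h₃₂`, `h₄₃`, `h₄₂` of the triangular array, in
cyclic order. -/
def center : Fin 3 → Fin 15 :=
  ![4, 8, 7]

/-- The positions of the six neighbours of an inner vertex in cyclic order, starting with the next
and the previous inner vertex. -/
def neighbor : Fin 3 → Fin 6 → Fin 15 :=
  ![![8, 7, 3, 1, 2, 5],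
    ![7, 4, 5, 9, 13, 12],
    ![4, 8, 12, 11, 6, 3]]

/-- The slack in the rhombus inequality whose short diagonal is the `d`-th spoke of the inner
vertex `v`. -/
def gap (h : Fin 15 → ℤ) (v : Fin 3) (d : Fin 6) : ℤ :=
  h (center v) + h (neighbor v d) - (h (neighbor v (d - 1)) + h (neighbor v (d + 1)))

/-- The alternating sum of an array around an inner vertex. Up to sign, this is the difference of
the gaps on any two opposite spokes. -/
def twist (h : Fin 15 → ℤ) (v : Fin 3) : ℤ :=
  h (neighbor v 0) - h (neighbor v 1) + h (neighbor v 2) - h (neighbor v 3) + h (neighbor v 4) -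
    h (neighbor v 5)

lemma gap_sub_gap_opposite (h : Fin 15 → ℤ) (v : Fin 3) (d : Fin 6) :
    gap h v d - gap h v (d + 3) = (-1) ^ (d : ℕ) * twist h v := by
  have neg_one : (-1 : Fin 6) = 5 := rfl
  fin_cases d <;> simp [gap, twist, neg_one] <;> ring

lemma gap_zero_eq_gap_succ_one (h : Fin 15 → ℤ) (v : Fin 3) : gap h v 0 = gap h (v + 1) 1 := by
  fin_cases v <;> simp [gap, center, neighbor] <;> ring

lemma gap_nonneg {h : Fin 15 → ℤ} (hh : IsHive4 h) (v : Fin 3) (d : Fin 6) : 0 ≤ gap h v d := by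
  unfold IsHive4 at hh
  fin_cases v <;> fin_cases d <;> simp [gap, center, neighbor] <;> linarith

lemma posPart_twist_le_gap_zero {h : Fin 15 → ℤ} (hh : IsHive4 h) (v : Fin 3) :
    (twist h v)⁺ ≤ gap h v 0 := by
  have opposite : gap h v 0 - gap h v 3 = twist h v := by
    simpa using gap_sub_gap_opposite h v 0
  exact sup_le (by linarith [gap_nonneg hh v 3]) (gap_nonneg hh v 0)

lemma negPart_twist_le_gap_one {h : Fin 15 → ℤ} (hh : IsHive4 h) (v : Fin 3) :
    (twist h v)⁻ ≤ gap h v 1 := by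
  have opposite : gap h v 1 - gap h v 4 = -twist h v := by
    simpa using gap_sub_gap_opposite h v 1
  exact sup_le (by linarith [gap_nonneg hh v 4]) (gap_nonneg hh v 1)

lemma negPart_twist_le_gap_five {h : Fin 15 → ℤ} (hh : IsHive4 h) (v : Fin 3) :
    (twist h v)⁻ ≤ gap h v 5 := by
  have opposite : gap h v 5 - gap h v 2 = -twist h v := by
    simpa using gap_sub_gap_opposite h v 5
  exact sup_le (by linarith [gap_nonneg hh v 2]) (gap_nonneg hh v 5)

/-- The multiplicity of the generator with twist `1` at `v`, `-1` at `v + 1` and `0` at the third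
inner vertex. -/
def dipoleMult (h : Fin 15 → ℤ) (v : Fin 3) : ℤ :=
  (twist h v)⁺ ⊓ (twist h (v + 1))⁻

/-- The multiplicity of the generator whose only nonzero twist is `1` at `v`. -/
def posTripodMult (h : Fin 15 → ℤ) (v : Fin 3) : ℤ :=
  (twist h v)⁺ - dipoleMult h v

/-- The multiplicity of the generator whose only nonzero twist is `-1` at `v + 1`. The index is
shifted because it competes with the dipole from `v` to `v + 1`. -/
def negTripodMult (h : Fin 15 → ℤ) (v : Fin 3) : ℤ :=
  (twist h (v + 1))⁻ - dipoleMult h v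

/-- The multiplicity of the generator that bends exactly along the line through the inner vertices
`v` and `v + 1`. -/
def edgeLineMult (h : Fin 15 → ℤ) (v : Fin 3) : ℤ :=
  gap h v 0 - (twist h v)⁺ ⊔ (twist h (v + 1))⁻

/-- The multiplicity of the generator that bends exactly along the line through the inner vertex
`v` that avoids the other two. -/
def freeLineMult (h : Fin 15 → ℤ) (v : Fin 3) : ℤ :=
  gap h v 5 - (twist h v)⁻

/-- The multiplicities of the twenty generators in a hive. Besides the five families indexed by the
inner vertices, there are the three corner gaps and the last parts of the boundary sequences `b` and
`c`. -/
def mult (h : Fin 15 → ℤ) : Fin 20 → ℤ :=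
  ![edgeLineMult h 2,
    freeLineMult h 1,
    h 13 + h 9 - (h 14 + h 8),
    h 14 - h 13,
    h 1 + h 2 - (h 4 + h 0),
    negTripodMult h 2,
    negTripodMult h 0,
    edgeLineMult h 0,
    freeLineMult h 0,
    negTripodMult h 1,
    freeLineMult h 2,
    edgeLineMult h 1,
    h 6 + h 11 - (h 10 + h 7),
    h 10 - h 6,
    dipoleMult h 0,
    posTripodMult h 0,
    dipoleMult h 1,
    posTripodMult h 2,
    posTripodMult h 1,
    dipoleMult h 2]

lemma dipoleMult_nonneg (h : Fin 15 → ℤ) (v : Fin 3) : 0 ≤ dipoleMult h v :=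
  le_inf (posPart_nonneg _) (negPart_nonneg _)

lemma posTripodMult_nonneg (h : Fin 15 → ℤ) (v : Fin 3) : 0 ≤ posTripodMult h v :=
  sub_nonneg.2 inf_le_left

lemma negTripodMult_nonneg (h : Fin 15 → ℤ) (v : Fin 3) : 0 ≤ negTripodMult h v :=
  sub_nonneg.2 inf_le_right

lemma edgeLineMult_nonneg {h : Fin 15 → ℤ} (hh : IsHive4 h) (v : Fin 3) :
    0 ≤ edgeLineMult h v := by
  refine sub_nonneg.2 (sup_le (posPart_twist_le_gap_zero hh v) ?_)
  rw [gap_zero_eq_gap_succ_one]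
  exact negPart_twist_le_gap_one hh (v + 1)

lemma freeLineMult_nonneg {h : Fin 15 → ℤ} (hh : IsHive4 h) (v : Fin 3) :
    0 ≤ freeLineMult h v :=
  sub_nonneg.2 (negPart_twist_le_gap_five hh v)

lemma mult_nonneg {h : Fin 15 → ℤ} (hh : IsHive4 h) (k : Fin 20) : 0 ≤ mult h k := by
  have edge := edgeLineMult_nonneg hh
  have free := freeLineMult_nonneg hh
  have pos := posTripodMult_nonneg h
  have neg := negTripodMult_nonneg h
  have dipole := dipoleMult_nonneg h
  unfold IsHive4 at hh
  fin_cases k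
  exacts [edge 2, free 1, sub_nonneg.2 (by linarith), sub_nonneg.2 (by linarith),
    sub_nonneg.2 (by linarith), neg 2, neg 0, edge 0, free 0, neg 1, free 2, edge 1,
    sub_nonneg.2 (by linarith), sub_nonneg.2 (by linarith), dipole 0, pos 0, dipole 1, pos 2,
    pos 1, dipole 2]

lemma gap_zero_eq_sum_mult (h : Fin 15 → ℤ) (v : Fin 3) :
    gap h v 0 = edgeLineMult h v + posTripodMult h v + negTripodMult h v + dipoleMult h v := by
  have max_add_min := inf_add_sup (twist h v)⁺ (twist h (v + 1))⁻
  unfold edgeLineMult posTripodMult negTripodMult dipoleMult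
  linarith

lemma gap_succ_five_eq_sum_mult (h : Fin 15 → ℤ) (v : Fin 3) :
    gap h (v + 1) 5 = freeLineMult h (v + 1) + negTripodMult h v + dipoleMult h v := by
  unfold freeLineMult negTripodMult
  ring

lemma twist_succ_eq_sum_mult (h : Fin 15 → ℤ) (v : Fin 3) :
    twist h (v + 1) = posTripodMult h (v + 1) + dipoleMult h (v + 1) -
      (negTripodMult h v + dipoleMult h v) := by
  have pos_sub_neg := posPart_sub_negPart (twist h (v + 1))
  unfold posTripodMult negTripodMult
  linarith

theorem sum_mult_mul_hive4Gens {h : Fin 15 → ℤ} (h_zero : h 0 = 0) (j : Fin 15) :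
    ∑ k, mult h k * hive4Gens k j = h j := by
  have edge := gap_zero_eq_sum_mult h
  have free := gap_succ_five_eq_sum_mult h
  have twists := twist_succ_eq_sum_mult h
  simp only [gap, twist, center, neighbor, Fin.forall_fin_succ, Fin.isValue, Fin.succ_zero_eq_one,
    Fin.succ_one_eq_two, Fin.reduceAdd, Fin.reduceSub, zero_add, zero_sub, Matrix.cons_val',
    Matrix.cons_val, Matrix.cons_val_zero, Matrix.cons_val_one, Matrix.cons_val_succ,
    Matrix.cons_val_fin_one, IsEmpty.forall_iff, and_true] at edge free twists
  -- An array with first entry `0` is determined by the fourteen linear forms whose values are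
  -- given by `edge`, `free`, `twists` and the five explicit entries of `mult`.
  fin_cases j <;> simp [Fin.sum_univ_succ, mult, hive4Gens] <;> linarith

theorem isHive4_hive4Gens (k : Fin 20) : IsHive4 (hive4Gens k) := by
  fin_cases k <;> simp [IsHive4, hive4Gens]

end Hive4

/-- The monoid `H(4)` of hives for `GL(4)` is generated as a commutative monoid by the
twenty hives `h₁, ..., h₂₀`: each of them is a hive, and every hive for `GL(4)` is an
`ℕ`-linear combination of them. -/
theorem hive4_generation :
    (∀ k : Fin 20, IsHive4 (hive4Gens k)) ∧
    (∀ h : Fin 15 → ℤ, IsHive4 h →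
      ∃ m : Fin 20 → ℕ, h = fun j => ∑ k : Fin 20, (m k : ℤ) * hive4Gens k j) := by
  refine ⟨Hive4.isHive4_hive4Gens, fun h hh => ⟨fun k => (Hive4.mult h k).toNat, ?_⟩⟩
  funext j
  simp only [Int.toNat_of_nonneg (Hive4.mult_nonneg hh _), Hive4.sum_mult_mul_hive4Gens hh.1]
end

section
/- The GL(2) tensor product algebra TA(2) = C[M_2 ⊕ M_2]^{U_2 × U_2 × U_2} is generated as a C-algebra by the five polynomials g_1 = det [[y_{11}, y_{12}], [y_{21}, y_{22}]], g_2 = det [[x_{11}, y_{11}], [x_{21}, y_{21}]], g_3 = x_{11}, g_4 = det [[x_{11}, x_{12}], [x_{21}, x_{22}]], g_5 = y_{11}. -/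
open MvPolynomial

/-- The polynomial ring `ℂ[M_n ⊕ M_n]` in the variables `x_{ab}` (indexed by
`Sum.inl (a, b)`) and `y_{ab}` (indexed by `Sum.inr (a, b)`), `1 ≤ a, b ≤ n`. -/
abbrev MV (n : ℕ) := MvPolynomial ((Fin n × Fin n) ⊕ (Fin n × Fin n)) ℂ

/-- `g` is upper triangular with all diagonal entries equal to `1`. -/
def IsUniUpper {n : ℕ} (g : Matrix (Fin n) (Fin n) ℂ) : Prop :=
  (∀ i, g i i = 1) ∧ ∀ i j : Fin n, j < i → g i j = 0

/-- The action of `(g₁, g₂, g₃) ∈ GL(n)³` on `ℂ[M_n ⊕ M_n]`, given by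
`(g·f)(m₁, m₂) = f(g₁ᵀ m₁ g₂, g₁ᵀ m₂ g₃)`: it substitutes for `x_{ab}` the
`(a,b)` entry of `g₁ᵀ X g₂` and for `y_{ab}` the `(a,b)` entry of `g₁ᵀ Y g₃`. -/
noncomputable def act (n : ℕ) (g1 g2 g3 : Matrix (Fin n) (Fin n) ℂ) : MV n →ₐ[ℂ] MV n :=
  aeval (Sum.elim
    (fun p : Fin n × Fin n => ∑ c : Fin n, ∑ d : Fin n,
      C (g1 c p.1) * C (g2 d p.2) * X (Sum.inl (c, d)))
    (fun p : Fin n × Fin n => ∑ c : Fin n, ∑ d : Fin n,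
      C (g1 c p.1) * C (g3 d p.2) * X (Sum.inr (c, d))))

/-- The tensor product algebra `TA(n)`: the subalgebra of `ℂ[M_n ⊕ M_n]` of
polynomials invariant under `U_n × U_n × U_n`. -/
noncomputable def TA (n : ℕ) : Subalgebra ℂ (MV n) where
  carrier := {f | ∀ g1 g2 g3 : Matrix (Fin n) (Fin n) ℂ,
      IsUniUpper g1 → IsUniUpper g2 → IsUniUpper g3 → act n g1 g2 g3 f = f}
  mul_mem' := by
    intro a b ha hb g1 g2 g3 u1 u2 u3
    rw [map_mul, ha g1 g2 g3 u1 u2 u3, hb g1 g2 g3 u1 u2 u3]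
  one_mem' := by
    intro g1 g2 g3 u1 u2 u3
    rw [map_one]
  add_mem' := by
    intro a b ha hb g1 g2 g3 u1 u2 u3
    rw [map_add, ha g1 g2 g3 u1 u2 u3, hb g1 g2 g3 u1 u2 u3]
  zero_mem' := by
    intro g1 g2 g3 u1 u2 u3
    rw [map_zero]
  algebraMap_mem' := by
    intro r g1 g2 g3 u1 u2 u3
    exact (act n g1 g2 g3).commutes r

/-- The coordinate `x_{ab}` on the first matrix summand (`a b` zero-based). -/
noncomputable def xv (a b : Fin 2) : MV 2 := X (Sum.inl (a, b))

/-- The coordinate `y_{ab}` on the second matrix summand (`a b` zero-based). -/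
noncomputable def yv (a b : Fin 2) : MV 2 := X (Sum.inr (a, b))

/-- `g₁ = det [[y₁₁, y₁₂], [y₂₁, y₂₂]]`. -/
noncomputable def g1 : MV 2 := yv 0 0 * yv 1 1 - yv 0 1 * yv 1 0

/-- `g₂ = det [[x₁₁, y₁₁], [x₂₁, y₂₁]]`. -/
noncomputable def g2 : MV 2 := xv 0 0 * yv 1 0 - yv 0 0 * xv 1 0

/-- `g₃ = x₁₁`. -/
noncomputable def g3 : MV 2 := xv 0 0

/-- `g₄ = det [[x₁₁, x₁₂], [x₂₁, x₂₂]]`. -/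
noncomputable def g4 : MV 2 := xv 0 0 * xv 1 1 - xv 0 1 * xv 1 0

/-- `g₅ = y₁₁`. -/
noncomputable def g5 : MV 2 := yv 0 0

/-! Where `x₁₁ ≠ 0` and `y₁₁ ≠ 0`, row and column operations in `U₂ × U₂ × U₂` bring `(m₁, m₂)` to
a normal form whose entries are polynomials in the `gⱼ` divided by `g₃ g₅`. An invariant `f` takes
the same value there, so `(g₃ g₅) ^ N * f` lies in the subalgebra generated by the `gⱼ` for some
`N`. It remains to cancel `g₃` and `g₅`: if `g₃ f = p(g₁, …, g₅)`, then `p` vanishes at the values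
of `(g₁, …, g₅)` on the hyperplane `x₁₁ = 0`, which are dense in `t₃ = 0`; hence the variable `t₃`
divides `p`, and `f` is a polynomial in the `gⱼ`. The same argument applies to `g₅`. -/

theorem mem_of_pow_mul_mem {M : Type*} [Monoid M] {S : Set M} {s x : M}
    (hsat : ∀ y, s * y ∈ S → y ∈ S) (n : ℕ) (hx : s ^ n * x ∈ S) : x ∈ S := by
  induction n with
  | zero => simpa using hx
  | succ n ih => exact ih (hsat _ (by rwa [← mul_assoc, ← pow_succ']))

section Polynomial

variable {R σ ι : Type*} [CommRing R]

theorem eval_aeval_eq_eval (v : σ → R) (g : ι → MvPolynomial σ R) (p : MvPolynomial ι R) :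
    eval v (aeval g p) = eval (fun j => eval v (g j)) p := by
  simpa only [aeval_eq_eval, RingHom.coe_coe] using comp_aeval_apply g (aeval v) p

theorem X_dvd_sub_aeval_update_X_zero [DecidableEq ι] (i : ι) (p : MvPolynomial ι R) :
    X i ∣ p - aeval (Function.update X i 0) p := by
  let π := Ideal.Quotient.mkₐ R (Ideal.span {(X i : MvPolynomial ι R)})
  have hπ : π = π.comp (aeval (Function.update X i 0)) := by
    ext j
    rcases eq_or_ne j i with rfl | hj
    · simp [π]
    · simp [hj]
  rw [← Ideal.mem_span_singleton, ← Ideal.Quotient.eq]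
  exact DFunLike.congr_fun hπ p

variable [IsDomain R] [Infinite R]

theorem X_dvd_of_forall_eval_eq_zero {i : ι} {p : MvPolynomial ι R}
    (hp : ∀ t : ι → R, t i = 0 → eval t p = 0) : X i ∣ p := by
  classical
  have hzero : aeval (Function.update X i 0) p = (0 : MvPolynomial ι R) := by
    refine MvPolynomial.funext fun t => ?_
    rw [eval_aeval_eq_eval, map_zero]
    exact hp _ (by simp)
  simpa only [hzero, sub_zero] using X_dvd_sub_aeval_update_X_zero i p

-- `hdom` makes the `g j` with `j ≠ i` algebraically independent on the hypersurface `g i = 0`: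
-- a relation `p` between them vanishes wherever `t i = 0` and `q ≠ 0`, so `X i` divides `p * q`.
theorem mem_adjoin_range_of_mul_mem {g : ι → MvPolynomial σ R} {i : ι} (hgi : g i ≠ 0)
    {q : MvPolynomial ι R} (hq : ¬ X i ∣ q)
    (hdom : ∀ t : ι → R, t i = 0 → eval t q ≠ 0 → ∃ v : σ → R, ∀ j, eval v (g j) = t j)
    {f : MvPolynomial σ R} (hf : g i * f ∈ Algebra.adjoin R (Set.range g)) :
    f ∈ Algebra.adjoin R (Set.range g) := by
  rw [Algebra.adjoin_range_eq_range_aeval] at hf ⊢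
  obtain ⟨p, hp : aeval g p = g i * f⟩ := hf
  have hpq : X i ∣ p * q := by
    refine X_dvd_of_forall_eval_eq_zero fun t ht => ?_
    rw [map_mul, mul_eq_zero]
    by_contra! ⟨hpt, hqt⟩
    obtain ⟨v, hv⟩ := hdom t ht hqt
    apply hpt
    rw [← _root_.funext hv, ← eval_aeval_eq_eval, hp, map_mul, hv, ht, zero_mul]
  obtain ⟨r, rfl⟩ := (X_dvd_mul_iff.mp hpq).resolve_right hq
  rw [map_mul, aeval_X] at hp
  exact ⟨r, mul_left_cancel₀ hgi hp⟩

end Polynomial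

section Field

variable {k σ : Type*} [Field k] {A : Subalgebra k (MvPolynomial σ k)} {s : MvPolynomial σ k}
  {q : σ → MvPolynomial σ k}

theorem exists_pow_mul_eval_div_eq (hs : s ∈ A) (hq : ∀ j, q j ∈ A) (f : MvPolynomial σ k) :
    ∃ N : ℕ, ∃ p ∈ A, ∀ v : σ → k, eval v s ≠ 0 →
      eval v s ^ N * eval (fun j => eval v (q j) / eval v s) f = eval v p := by
  induction f using MvPolynomial.induction_on with
  | C c => exact ⟨0, C c, A.algebraMap_mem c, by simp⟩
  | add f₁ f₂ h₁ h₂ =>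
    obtain ⟨N₁, p₁, hp₁, h₁⟩ := h₁
    obtain ⟨N₂, p₂, hp₂, h₂⟩ := h₂
    refine ⟨N₁ + N₂, s ^ N₂ * p₁ + s ^ N₁ * p₂,
      A.add_mem (A.mul_mem (A.pow_mem hs _) hp₁) (A.mul_mem (A.pow_mem hs _) hp₂), fun v hv => ?_⟩
    simp only [map_add, map_mul, map_pow, ← h₁ v hv, ← h₂ v hv]
    ring
  | mul_X f j h =>
    obtain ⟨N, p, hp, h⟩ := h
    refine ⟨N + 1, p * q j, A.mul_mem hp (hq j), fun v hv => ?_⟩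
    simp only [map_mul, eval_X, ← h v hv, pow_succ]
    field_simp

theorem mem_of_eval_div_eq [Infinite k] (hs : s ∈ A) (hs₀ : s ≠ 0)
    (hsat : ∀ f, s * f ∈ A → f ∈ A) (hq : ∀ j, q j ∈ A) {f : MvPolynomial σ k}
    (hf : ∀ v : σ → k, eval v s ≠ 0 → eval (fun j => eval v (q j) / eval v s) f = eval v f) :
    f ∈ A := by
  obtain ⟨N, p, hp, hfp⟩ := exists_pow_mul_eval_div_eq hs hq f
  have hmul : s * (s ^ N * f) = s * p := by
    refine MvPolynomial.funext fun v => ?_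
    by_cases hv : eval v s = 0
    · simp only [map_mul, hv, zero_mul]
    · simp only [map_mul, map_pow, ← hfp v hv, hf v hv]
  have hpow : s ^ N * f ∈ A := mul_left_cancel₀ hs₀ hmul ▸ hp
  exact mem_of_pow_mul_mem (S := (A : Set (MvPolynomial σ k))) hsat N hpow

end Field

section Action

variable {n : ℕ}

/-- The pair of matrices `(m₁, m₂)` as an assignment of values to the variables `x_{ab}`, `y_{ab}`.
The entries may be numbers, giving a point of `M_n ⊕ M_n`, or polynomials, giving a polynomial
map into `M_n ⊕ M_n`. -/
def pairCoords {R : Type*} (m₁ m₂ : Matrix (Fin n) (Fin n) R) :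
    (Fin n × Fin n) ⊕ (Fin n × Fin n) → R :=
  Sum.elim (fun p => m₁ p.1 p.2) (fun p => m₂ p.1 p.2)

@[simp]
theorem pairCoords_inl {R : Type*} (m₁ m₂ : Matrix (Fin n) (Fin n) R) (a b : Fin n) :
    pairCoords m₁ m₂ (.inl (a, b)) = m₁ a b := rfl

@[simp]
theorem pairCoords_inr {R : Type*} (m₁ m₂ : Matrix (Fin n) (Fin n) R) (a b : Fin n) :
    pairCoords m₁ m₂ (.inr (a, b)) = m₂ a b := rfl

theorem exists_eq_pairCoords {R : Type*} (v : (Fin n × Fin n) ⊕ (Fin n × Fin n) → R) :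
    ∃ m₁ m₂ : Matrix (Fin n) (Fin n) R, v = pairCoords m₁ m₂ :=
  ⟨.of fun a b => v (.inl (a, b)), .of fun a b => v (.inr (a, b)), (Sum.elim_comp_inl_inr v).symm⟩

open Matrix

theorem eval_act (a b c m₁ m₂ : Matrix (Fin n) (Fin n) ℂ) (f : MV n) :
    eval (pairCoords m₁ m₂) (act n a b c f) = eval (pairCoords (aᵀ * m₁ * b) (aᵀ * m₂ * c)) f := by
  have entry (a b m : Matrix (Fin n) (Fin n) ℂ) (i j : Fin n) :
      ∑ k, ∑ l, a k i * b l j * m k l = (aᵀ * m * b) i j := by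
    simp only [mul_apply, transpose_apply, Finset.sum_mul]
    rw [Finset.sum_comm]
    exact Finset.sum_congr rfl fun _ _ => Finset.sum_congr rfl fun _ _ => by ring
  rw [act, eval_aeval_eq_eval]
  congr 2
  ext (⟨i, j⟩ | ⟨i, j⟩) <;> simp [← entry]

theorem mem_TA_iff_eval_eq {f : MV n} :
    f ∈ TA n ↔ ∀ a b c m₁ m₂ : Matrix (Fin n) (Fin n) ℂ,
      IsUniUpper a → IsUniUpper b → IsUniUpper c →
        eval (pairCoords (aᵀ * m₁ * b) (aᵀ * m₂ * c)) f = eval (pairCoords m₁ m₂) f := by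
  constructor
  · intro hf a b c m₁ m₂ ha hb hc
    rw [← eval_act, hf a b c ha hb hc]
  · intro hf a b c ha hb hc
    refine MvPolynomial.funext fun v => ?_
    obtain ⟨m₁, m₂, rfl⟩ := exists_eq_pairCoords v
    rw [eval_act, hf a b c m₁ m₂ ha hb hc]

end Action

section TwoByTwo

open Matrix

theorem isUniUpper_fin_two_iff {a : Matrix (Fin 2) (Fin 2) ℂ} :
    IsUniUpper a ↔ ∃ t, a = !![1, t; 0, 1] := by
  constructor
  · rintro ⟨hdiag, hlower⟩
    refine ⟨a 0 1, ?_⟩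
    rw [eta_fin_two a, hdiag 0, hdiag 1, hlower 1 0 Fin.zero_lt_one]
    rfl
  · rintro ⟨t, rfl⟩
    simp [IsUniUpper, Fin.forall_fin_two]

theorem exists_isUniUpper_normalForm {m₁ m₂ : Matrix (Fin 2) (Fin 2) ℂ}
    (h₁ : m₁ 0 0 ≠ 0) (h₂ : m₂ 0 0 ≠ 0) :
    ∃ a b c, IsUniUpper a ∧ IsUniUpper b ∧ IsUniUpper c ∧
      aᵀ * m₁ * b = !![m₁ 0 0, 0; 0, m₁.det / m₁ 0 0] ∧
      aᵀ * m₂ * c = !![m₂ 0 0, 0;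
        (m₁ 0 0 * m₂ 1 0 - m₂ 0 0 * m₁ 1 0) / m₁ 0 0, m₂.det / m₂ 0 0] := by
  refine ⟨!![1, -m₁ 1 0 / m₁ 0 0; 0, 1], !![1, -m₁ 0 1 / m₁ 0 0; 0, 1],
    !![1, -m₂ 0 1 / m₂ 0 0; 0, 1], isUniUpper_fin_two_iff.mpr ⟨_, rfl⟩,
    isUniUpper_fin_two_iff.mpr ⟨_, rfl⟩, isUniUpper_fin_two_iff.mpr ⟨_, rfl⟩, ?_, ?_⟩ <;>
  · ext i j
    fin_cases i <;> fin_cases j <;>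
      simp [mul_apply, Fin.sum_univ_two, det_fin_two] <;> field_simp <;> ring

/-- The five generators `g₁, …, g₅` of the tensor product algebra `TA(2)` as an indexed family;
the index is zero-based, so that `generators j` is the paper's `g_{j+1}`. -/
noncomputable def generators : Fin 5 → MV 2 := ![g1, g2, g3, g4, g5]

theorem range_generators : Set.range generators = {g1, g2, g3, g4, g5} := by
  simp only [generators, range_cons, range_empty, Set.union_empty, Set.singleton_union]

theorem generators_mem_adjoin (j : Fin 5) :
    generators j ∈ Algebra.adjoin ℂ (Set.range generators) :=
  Algebra.subset_adjoin (Set.mem_range_self j)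

theorem eval_generators (m₁ m₂ : Matrix (Fin 2) (Fin 2) ℂ) (j : Fin 5) :
    eval (pairCoords m₁ m₂) (generators j) =
      ![m₂.det, m₁ 0 0 * m₂ 1 0 - m₂ 0 0 * m₁ 1 0, m₁ 0 0, m₁.det, m₂ 0 0] j := by
  fin_cases j <;> simp [generators, g1, g2, g3, g4, g5, xv, yv, det_fin_two]

theorem generators_mem_TA (j : Fin 5) : generators j ∈ TA 2 := by
  refine mem_TA_iff_eval_eq.mpr fun a b c m₁ m₂ ha hb hc => ?_
  obtain ⟨r, rfl⟩ := isUniUpper_fin_two_iff.mp ha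
  obtain ⟨s, rfl⟩ := isUniUpper_fin_two_iff.mp hb
  obtain ⟨t, rfl⟩ := isUniUpper_fin_two_iff.mp hc
  rw [eval_generators, eval_generators]
  fin_cases j <;> simp [mul_apply, Fin.sum_univ_two]
  ring

theorem mem_adjoin_of_g3_mul_mem {f : MV 2}
    (hf : g3 * f ∈ Algebra.adjoin ℂ (Set.range generators)) :
    f ∈ Algebra.adjoin ℂ (Set.range generators) := by
  have hndvd : ¬ (X 2 : MvPolynomial (Fin 5) ℂ) ∣ X 1 * X 4 := by
    simp [X_dvd_mul_iff, X_dvd_X]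
  have hg3 : generators 2 ≠ 0 := X_ne_zero _
  refine mem_adjoin_range_of_mul_mem hg3 hndvd (fun t ht₂ hq => ?_) hf
  obtain ⟨ht₁, ht₄⟩ : t 1 ≠ 0 ∧ t 4 ≠ 0 := by simpa using hq
  refine ⟨pairCoords !![0, t 3 * t 4 / t 1; -t 1 / t 4, 0] !![t 4, 0; 0, t 0 / t 4], fun j => ?_⟩
  rw [eval_generators]
  fin_cases j <;> simp [ht₂] <;> field_simp

theorem mem_adjoin_of_g5_mul_mem {f : MV 2}
    (hf : g5 * f ∈ Algebra.adjoin ℂ (Set.range generators)) :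
    f ∈ Algebra.adjoin ℂ (Set.range generators) := by
  have hndvd : ¬ (X 4 : MvPolynomial (Fin 5) ℂ) ∣ X 1 * X 2 := by
    simp [X_dvd_mul_iff, X_dvd_X]
  have hg5 : generators 4 ≠ 0 := X_ne_zero _
  refine mem_adjoin_range_of_mul_mem hg5 hndvd (fun t ht₄ hq => ?_) hf
  obtain ⟨ht₁, ht₂⟩ : t 1 ≠ 0 ∧ t 2 ≠ 0 := by simpa using hq
  refine ⟨pairCoords !![t 2, 0; 0, t 3 / t 2] !![0, -t 0 * t 2 / t 1; t 1 / t 2, 0], fun j => ?_⟩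
  rw [eval_generators]
  fin_cases j <;> simp [ht₄] <;> field_simp

/-- The numerators of the normal form of `exists_isUniUpper_normalForm` over the common
denominator `g₃ g₅`. -/
noncomputable def normalFormNumerator : (Fin 2 × Fin 2) ⊕ (Fin 2 × Fin 2) → MV 2 :=
  pairCoords !![g3 * (g3 * g5), 0; 0, g5 * g4] !![g5 * (g3 * g5), 0; g5 * g2, g3 * g1]

theorem normalFormNumerator_mem_adjoin (j : (Fin 2 × Fin 2) ⊕ (Fin 2 × Fin 2)) :
    normalFormNumerator j ∈ Algebra.adjoin ℂ (Set.range generators) := by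
  have h₁ : g1 ∈ Algebra.adjoin ℂ (Set.range generators) := generators_mem_adjoin 0
  have h₂ : g2 ∈ Algebra.adjoin ℂ (Set.range generators) := generators_mem_adjoin 1
  have h₃ : g3 ∈ Algebra.adjoin ℂ (Set.range generators) := generators_mem_adjoin 2
  have h₄ : g4 ∈ Algebra.adjoin ℂ (Set.range generators) := generators_mem_adjoin 3
  have h₅ : g5 ∈ Algebra.adjoin ℂ (Set.range generators) := generators_mem_adjoin 4
  rcases j with ⟨a, b⟩ | ⟨a, b⟩ <;> fin_cases a <;> fin_cases b <;>
    simp [normalFormNumerator, mul_mem, *]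

theorem eval_normalFormNumerator_div_eq {f : MV 2} (hf : f ∈ TA 2)
    {v : (Fin 2 × Fin 2) ⊕ (Fin 2 × Fin 2) → ℂ} (hv : eval v (g3 * g5) ≠ 0) :
    eval (fun j => eval v (normalFormNumerator j) / eval v (g3 * g5)) f = eval v f := by
  obtain ⟨m₁, m₂, rfl⟩ := exists_eq_pairCoords v
  have e₁ : eval (pairCoords m₁ m₂) g1 = m₂.det := eval_generators m₁ m₂ 0
  have e₂ : eval (pairCoords m₁ m₂) g2 = m₁ 0 0 * m₂ 1 0 - m₂ 0 0 * m₁ 1 0 :=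
    eval_generators m₁ m₂ 1
  have e₃ : eval (pairCoords m₁ m₂) g3 = m₁ 0 0 := eval_generators m₁ m₂ 2
  have e₄ : eval (pairCoords m₁ m₂) g4 = m₁.det := eval_generators m₁ m₂ 3
  have e₅ : eval (pairCoords m₁ m₂) g5 = m₂ 0 0 := eval_generators m₁ m₂ 4
  obtain ⟨h₁, h₂⟩ : m₁ 0 0 ≠ 0 ∧ m₂ 0 0 ≠ 0 := by simpa [e₃, e₅] using hv
  obtain ⟨a, b, c, ha, hb, hc, hm₁, hm₂⟩ := exists_isUniUpper_normalForm h₁ h₂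
  rw [← mem_TA_iff_eval_eq.mp hf a b c m₁ m₂ ha hb hc, hm₁, hm₂]
  congr 2
  ext (⟨i, j⟩ | ⟨i, j⟩) <;> fin_cases i <;> fin_cases j <;>
    simp [normalFormNumerator, e₁, e₂, e₃, e₄, e₅] <;> field_simp

end TwoByTwo

/-- The `GL(2)` tensor product algebra `TA(2)` is generated as a `ℂ`-algebra by the
five polynomials `g₁, ..., g₅`. -/
theorem TA2_generators :
    Algebra.adjoin ℂ ({g1, g2, g3, g4, g5} : Set (MV 2)) = TA 2 := by
  rw [← range_generators]
  refine le_antisymm (Algebra.adjoin_le (Set.range_subset_iff.mpr generators_mem_TA)) fun f hf => ?_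
  have hs : g3 * g5 ∈ Algebra.adjoin ℂ (Set.range generators) :=
    mul_mem (generators_mem_adjoin 2) (generators_mem_adjoin 4)
  have hs₀ : g3 * g5 ≠ 0 := mul_ne_zero (X_ne_zero _) (X_ne_zero _)
  have hsat (h : MV 2) (hh : g3 * g5 * h ∈ Algebra.adjoin ℂ (Set.range generators)) :
      h ∈ Algebra.adjoin ℂ (Set.range generators) :=
    mem_adjoin_of_g5_mul_mem (mem_adjoin_of_g3_mul_mem (mul_assoc g3 g5 h ▸ hh))
  exact mem_of_eval_div_eq hs hs₀ hsat normalFormNumerator_mem_adjoin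
    fun _ hv => eval_normalFormNumerator_div_eq hf hv
end
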